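/- Let n ≥ 1 and let Ω ⊆ ℍ^n. Suppose there exist a point ξ₀ ∈ Ω, an open set U ⊆ ℝ^{2n}, a continuous function f : U → ℝ, and an open set W ⊆ ℍ^n containing ξ₀ such that Ω ∩ W = {(x, y, f(x,y)) : (x,y) ∈ U} (i.e., a neighbourhood of ξ₀ in Ω is the graph of a continuous function over the z-plane). Then Ω is not geodetically convex. -/

import Mathlib

open MeasureTheory Set Real
open scoped ENNReal NNReal

noncomputable section

/-- Points of the Heisenberg group `ℍⁿ`, written `(x, y, t)` with `x, y ∈ ℝⁿ`, `t ∈ ℝ`. -/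
abbrev Hpt (n : ℕ) : Type := (Fin n → ℝ) × (Fin n → ℝ) × ℝ

/-- The projection of a point of `ℍⁿ` onto the horizontal `z = (x,y)` plane, viewed as a
point of the Euclidean space `ℝ^{2n}` (so that lengths are Euclidean lengths). -/
def hproj {n : ℕ} (p : Hpt n) : EuclideanSpace ℝ (Fin n ⊕ Fin n) :=
  (WithLp.equiv 2 ((Fin n ⊕ Fin n) → ℝ)).symm (Sum.elim p.1 p.2.1)

/-- A curve `γ` is a horizontal curve on `[a,b]` if it is (absolutely continuous, here:
Lipschitz) and almost everywhere it has a derivative `γ' = (x', y', t')` satisfying the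
horizontality condition `t' = 2 ∑ⱼ (xⱼ' yⱼ - yⱼ' xⱼ)`. -/
def IsHorizontal {n : ℕ} (γ : ℝ → Hpt n) (a b : ℝ) : Prop :=
  a ≤ b ∧ (∃ K : NNReal, LipschitzOnWith K γ (Icc a b)) ∧
    ∃ γ' : ℝ → Hpt n,
      (∀ᵐ s ∂(volume.restrict (Icc a b)), HasDerivAt γ (γ' s) s) ∧
      (∀ᵐ s ∂(volume.restrict (Icc a b)),
        (γ' s).2.2 = 2 * ∑ j, ((γ' s).1 j * (γ s).2.1 j - (γ' s).2.1 j * (γ s).1 j))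

/-- The length of a horizontal curve on `[a,b]`: the Euclidean length (total variation)
of its projection to the `z`-plane `ℝ^{2n}`. -/
def hLength {n : ℕ} (γ : ℝ → Hpt n) (a b : ℝ) : ℝ≥0∞ :=
  eVariationOn (fun s => hproj (γ s)) (Icc a b)

/-- The Carnot–Carathéodory distance: the infimum of lengths of horizontal curves
joining `p` to `q`. -/
def ccDist {n : ℕ} (p q : Hpt n) : ℝ≥0∞ :=
  ⨅ (γ : ℝ → Hpt n) (a : ℝ) (b : ℝ) (_ : IsHorizontal γ a b)
    (_ : γ a = p) (_ : γ b = q), hLength γ a b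

/-- `γ` is a geodesic on `[a,b]`: a horizontal curve whose length equals the
Carnot–Carathéodory distance between its endpoints. -/
def IsGeodesicOn {n : ℕ} (γ : ℝ → Hpt n) (a b : ℝ) : Prop :=
  IsHorizontal γ a b ∧ hLength γ a b = ccDist (γ a) (γ b)

/-- A set `A ⊆ ℍⁿ` is geodetically convex if every geodesic connecting any two points of
`A` lies in `A`. -/
def GeodConvexSet {n : ℕ} (A : Set (Hpt n)) : Prop :=
  ∀ p ∈ A, ∀ q ∈ A, ∀ (γ : ℝ → Hpt n) (a b : ℝ),
    IsGeodesicOn γ a b → γ a = p → γ b = q → ∀ s ∈ Icc a b, γ s ∈ A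

/-- A function `u : ℍⁿ → ℝ` is geodetically convex if its composition with every geodesic
is convex. -/
def GeodConvexFun {n : ℕ} (u : Hpt n → ℝ) : Prop :=
  ∀ (γ : ℝ → Hpt n) (a b : ℝ), IsGeodesicOn γ a b → ConvexOn ℝ (Icc a b) (u ∘ γ)

/-- The union of the images of all geodesics connecting pairs of points of `S`. -/
def geodJoin {n : ℕ} (S : Set (Hpt n)) : Set (Hpt n) :=
  {z | ∃ p ∈ S, ∃ q ∈ S, ∃ (γ : ℝ → Hpt n) (a b : ℝ),
    IsGeodesicOn γ a b ∧ γ a = p ∧ γ b = q ∧ z ∈ γ '' Icc a b}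

/-- The iterated geodesic hulls `G^m(A)`, with `G^0(A) = A`. -/
def Gm {n : ℕ} (A : Set (Hpt n)) : ℕ → Set (Hpt n)
  | 0 => A
  | (m + 1) => geodJoin (Gm A m)

open scoped Topology RealInnerProductSpace

/-!
Along a horizontal curve `(z, t)` starting at the origin, with arc length `ℓ`, the function
`k * (cot (k * ℓ + c) * ‖z‖ ^ 2 + t) - ℓ` is nonincreasing. This calibration gives an isoperimetric
inequality whose equality cases include lifts of circular arcs, which are therefore geodesics.

Suppose that `Ω` is geodetically convex and is near `p` the graph of a continuous function. On a
small circle in the tangent plane at `p` two antipodal points have the same height relative to `p`,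
so the horizontal segment between them lies in `Ω`, and the relative height vanishes on the whole
diameter `ℝ e`. A quarter circle from `-a e` to `∓b J e`, with `0 < b < a` chosen so that its lift
ends on the graph, crosses the diameter again at `-b e`. There its relative height is, up to a
constant factor, the area of a circular segment, hence nonzero, although the graph has height `0`
over `-b e`.
-/

section ArcLength

variable {F : Type*} [PseudoMetricSpace F] {f : ℝ → F} {s : Set ℝ} {K : ℝ≥0} {a x y : ℝ}

lemma eVariationOn_le_of_lipschitzOnWith (hf : LipschitzOnWith K f s) (hs : s ⊆ Icc x y) :
    eVariationOn f s ≤ K * ENNReal.ofReal (y - x) :=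
  calc eVariationOn (f ∘ id) s ≤ K * eVariationOn id s :=
        hf.comp_eVariationOn_le (mapsTo_id s)
    _ ≤ K * ENNReal.ofReal (y - x) := by
        rw [← eVariationOn_id_Icc]
        gcongr
        exact eVariationOn.mono id hs

lemma variationOnFromTo_le_of_lipschitzOnWith (hf : LipschitzOnWith K f s) (hxy : x ≤ y) :
    variationOnFromTo f s x y ≤ K * (y - x) := by
  rw [variationOnFromTo.eq_of_le f s hxy]
  refine ENNReal.toReal_le_of_le_ofReal (mul_nonneg K.coe_nonneg (sub_nonneg.2 hxy)) ?_
  rw [ENNReal.ofReal_mul K.coe_nonneg, ENNReal.ofReal_coe_nnreal]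
  exact eVariationOn_le_of_lipschitzOnWith (hf.mono inter_subset_left) inter_subset_right

lemma lipschitzOnWith_variationOnFromTo (hf : LipschitzOnWith K f s) (ha : a ∈ s) :
    LipschitzOnWith K (variationOnFromTo f s a) s := by
  refine LipschitzOnWith.of_le_add_mul K fun x hx y hy ↦ ?_
  have hbv := hf.locallyBoundedVariationOn
  rw [← sub_le_iff_le_add', variationOnFromTo.sub_right hbv ha hx hy]
  rcases le_total y x with hyx | hxy
  · simpa only [Real.dist_eq, abs_of_nonneg (sub_nonneg.2 hyx)] using
      variationOnFromTo_le_of_lipschitzOnWith hf hyx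
  · exact (variationOnFromTo.nonpos_of_ge f s hxy).trans
      (mul_nonneg K.coe_nonneg dist_nonneg)

lemma dist_le_variationOnFromTo (hf : LocallyBoundedVariationOn f s) (hx : x ∈ s) (hy : y ∈ s)
    (hxy : x ≤ y) : dist (f x) (f y) ≤ variationOnFromTo f s x y := by
  rw [variationOnFromTo.eq_of_le f s hxy, dist_edist]
  exact ENNReal.toReal_mono (hf x y hx hy)
    (eVariationOn.edist_le f ⟨hx, left_mem_Icc.2 hxy⟩ ⟨hy, right_mem_Icc.2 hxy⟩)

lemma norm_deriv_le_deriv_variationOnFromTo {E : Type*} [NormedAddCommGroup E]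
    [NormedSpace ℝ E] {f : ℝ → E} {f' : E} {v : ℝ} (hf : LocallyBoundedVariationOn f s)
    (ha : a ∈ s) (hs : s ∈ 𝓝 x) (hf' : HasDerivAt f f' x)
    (hv : HasDerivAt (variationOnFromTo f s a) v x) : ‖f'‖ ≤ v := by
  refine le_of_tendsto_of_tendsto
    (((hasDerivAt_iff_tendsto_slope.1 hf').norm).mono_left (nhdsGT_le_nhdsNE x))
    ((hasDerivAt_iff_tendsto_slope.1 hv).mono_left (nhdsGT_le_nhdsNE x)) ?_
  filter_upwards [self_mem_nhdsWithin, mem_nhdsWithin_of_mem_nhds hs] with y (hxy : x < y) hy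
  have hx : x ∈ s := mem_of_mem_nhds hs
  rw [slope_def_module, slope_def_field, norm_smul, norm_inv, Real.norm_of_nonneg
    (sub_pos.2 hxy).le, inv_mul_eq_div, variationOnFromTo.sub_right hf ha hy hx, ← dist_eq_norm,
    dist_comm]
  exact div_le_div_of_nonneg_right (dist_le_variationOnFromTo hf hx hy hxy.le)
    (sub_pos.2 hxy).le

end ArcLength

lemma abs_eq_one_of_sq_eq_one {R : Type*} [CommRing R] [LinearOrder R] [IsStrictOrderedRing R]
    {x : R} (hx : x ^ 2 = 1) : |x| = 1 := by
  rw [← abs_one (α := R), ← sq_eq_sq_iff_abs_eq_abs, hx, one_pow]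

lemma absolutelyContinuousOnInterval_le_of_ae_deriv_nonpos {g : ℝ → ℝ} {a b : ℝ} (hab : a ≤ b)
    (hg : AbsolutelyContinuousOnInterval g a b)
    (hg' : ∀ᵐ s, s ∈ Ioo a b → deriv g s ≤ 0) : g b ≤ g a := by
  rw [← sub_nonpos, ← hg.integral_deriv_eq_sub, intervalIntegral.integral_of_le hab,
    integral_Ioc_eq_integral_Ioo]
  exact integral_nonpos_of_ae ((ae_restrict_iff' measurableSet_Ioo).2 hg')

lemma hasDerivAt_cot {θ : ℝ} (h : sin θ ≠ 0) : HasDerivAt cot (-1 / sin θ ^ 2) θ := by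
  have hquot := (hasDerivAt_cos θ).div (hasDerivAt_sin θ) h
  have hnum : -sin θ * sin θ - cos θ * cos θ = -1 := by linarith [sin_sq_add_cos_sq θ]
  rw [hnum] at hquot
  exact hquot.congr_of_eventuallyEq (.of_forall cot_eq_cos_div_sin)

lemma exists_lipschitzOnWith_cot {ε φ : ℝ} (hε : 0 < ε) (hφ : φ < π) :
    ∃ K, LipschitzOnWith K cot (Icc ε φ) := by
  have hcot : ContDiffOn ℝ 1 (fun θ ↦ cos θ / sin θ) (Icc ε φ) :=
    contDiff_cos.contDiffOn.div contDiff_sin.contDiffOn fun θ hθ ↦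
      (sin_pos_of_pos_of_lt_pi (hε.trans_le hθ.1) (hθ.2.trans_lt hφ)).ne'
  obtain ⟨K, hK⟩ := hcot.exists_lipschitzOnWith one_ne_zero (convex_Icc _ _) isCompact_Icc
  exact ⟨K, funext cot_eq_cos_div_sin ▸ hK⟩

section Calibration

variable {E : Type*} [NormedAddCommGroup E] [InnerProductSpace ℝ E] {J : E →ₗᵢ[ℝ] E}

lemma norm_sq_smul_add_smul_of_skew (hJ : ∀ z, ⟪z, J z⟫ = 0) (c s : ℝ) (z : E) :
    ‖c • z + s • J z‖ ^ 2 = (c ^ 2 + s ^ 2) * ‖z‖ ^ 2 := by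
  rw [norm_add_sq_real, norm_smul, norm_smul, real_inner_smul_left, real_inner_smul_right, hJ,
    J.norm_map, mul_pow, mul_pow, norm_eq_abs, norm_eq_abs, sq_abs, sq_abs]
  ring

lemma calibration_deriv_nonpos (hJ : ∀ z, ⟪z, J z⟫ = 0) {z z' : E} {v θ k : ℝ}
    (hθ : 0 < sin θ) (hk : 0 < k) (hv : ‖z'‖ ≤ v) :
    k * (-1 / sin θ ^ 2 * (k * v) * ‖z‖ ^ 2 + cot θ * (2 * ⟪z, z'⟫) + 2 * ⟪z', J z⟫) - v ≤ 0 := by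
  have hrot : ‖cos θ • z + sin θ • J z‖ = ‖z‖ := by
    rw [← sq_eq_sq₀ (norm_nonneg _) (norm_nonneg _), norm_sq_smul_add_smul_of_skew hJ,
      cos_sq_add_sin_sq, one_mul]
  have hinner : cos θ * ⟪z, z'⟫ + sin θ * ⟪z', J z⟫ ≤ v * ‖z‖ :=
    calc cos θ * ⟪z, z'⟫ + sin θ * ⟪z', J z⟫ = ⟪z', cos θ • z + sin θ • J z⟫ := by
          rw [inner_add_right, real_inner_smul_right, real_inner_smul_right, real_inner_comm]
      _ ≤ ‖z'‖ * ‖cos θ • z + sin θ • J z‖ := real_inner_le_norm _ _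
      _ ≤ v * ‖z‖ := by rw [hrot]; gcongr
  set w := k / sin θ with hw
  have : 0 < w := div_pos hk hθ
  calc _ = 2 * w * (cos θ * ⟪z, z'⟫ + sin θ * ⟪z', J z⟫) - w ^ 2 * ‖z‖ ^ 2 * v - v := by
        rw [cot_eq_cos_div_sin, hw]
        field_simp
        ring
    _ ≤ 2 * w * (v * ‖z‖) - w ^ 2 * ‖z‖ ^ 2 * v - v := by gcongr
    _ = -(v * (w * ‖z‖ - 1) ^ 2) := by ring
    _ ≤ 0 := neg_nonpos.2 (mul_nonneg ((norm_nonneg _).trans hv) (sq_nonneg _))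

lemma calibration_le (hJ : ∀ z, ⟪z, J z⟫ = 0) {z : ℝ → E} {t ℓ : ℝ → ℝ} {a b φ k : ℝ}
    {K₁ K₂ : ℝ≥0} (hab : a ≤ b) (hk : 0 < k) (hφ : φ < π) (hkφ : k * ℓ b < φ)
    (hz : LipschitzOnWith K₁ z (Icc a b)) (ht : AbsolutelyContinuousOnInterval t a b)
    (hℓ : LipschitzOnWith K₂ ℓ (Icc a b)) (hℓ_mono : MonotoneOn ℓ (Icc a b))
    (hza : z a = 0) (hta : t a = 0) (hℓa : ℓ a = 0)
    (hderiv : ∀ᵐ s, s ∈ Ioo a b → ∃ z' v, HasDerivAt z z' s ∧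
      HasDerivAt t (2 * ⟪z', J (z s)⟫) s ∧ HasDerivAt ℓ v s ∧ ‖z'‖ ≤ v) :
    k * (cot φ * ‖z b‖ ^ 2 + t b) ≤ ℓ b := by
  set θ : ℝ → ℝ := fun s ↦ k * ℓ s + (φ - k * ℓ b) with hθ
  set g : ℝ → ℝ := fun s ↦ k * (cot (θ s) * ‖z s‖ ^ 2 + t s) - ℓ s with hg
  have hθ_mem : MapsTo θ (Icc a b) (Icc (φ - k * ℓ b) φ) := fun s hs ↦ by
    have hs₀ := hℓ_mono (left_mem_Icc.2 hab) hs hs.1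
    have hs₁ := hℓ_mono hs (right_mem_Icc.2 hab) hs.2
    constructor <;> simp only [hθ] <;> nlinarith
  have hg_ac : AbsolutelyContinuousOnInterval g a b := by
    obtain ⟨C, hC⟩ := exists_lipschitzOnWith_cot (sub_pos.2 hkφ) hφ
    have hθ_lip : LipschitzOnWith (‖k‖₊ * K₂ + 0) θ (Icc a b) :=
      ((lipschitzWith_smul k).comp_lipschitzOnWith hℓ).add
        (LipschitzWith.const _).lipschitzOnWith
    have hnorm := LipschitzWith.comp_lipschitzOnWith lipschitzWith_one_norm hz
    rw [← uIcc_of_le hab] at hnorm hℓ hθ_lip hθ_mem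
    have hcot_ac := (hC.comp hθ_lip hθ_mem).absolutelyContinuousOnInterval
    have hnorm_ac := hnorm.absolutelyContinuousOnInterval
    simp only [hg, sq]
    exact (((hcot_ac.fun_mul (hnorm_ac.fun_mul hnorm_ac)).fun_add ht).const_mul
      k).fun_sub hℓ.absolutelyContinuousOnInterval
  have hg' : ∀ᵐ s, s ∈ Ioo a b → deriv g s ≤ 0 := by
    filter_upwards [hderiv] with s hs hsab
    obtain ⟨z', v, hz', ht', hℓ', hv⟩ := hs hsab
    have hθs := hθ_mem (Ioo_subset_Icc_self hsab)
    have hsin : 0 < sin (θ s) :=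
      sin_pos_of_pos_of_lt_pi ((sub_pos.2 hkφ).trans_le hθs.1) (hθs.2.trans_lt hφ)
    have hθ' : HasDerivAt θ (k * v) s := (hℓ'.const_mul k).add_const _
    have hcot := (hasDerivAt_cot hsin.ne').comp s hθ'
    have hg' : HasDerivAt g _ s := (((hcot.mul hz'.norm_sq).add ht').const_mul k).sub hℓ'
    rw [hg'.deriv]
    exact calibration_deriv_nonpos hJ hsin hk hv
  have hgb := absolutelyContinuousOnInterval_le_of_ae_deriv_nonpos hab hg_ac hg'
  simpa [hg, hθ, hza, hta, hℓa] using hgb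

lemma mul_le_sq_of_forall_mul_le {L A φ : ℝ} (hL : 0 ≤ L) (hφ : 0 < φ)
    (h : ∀ k, 0 < k → k * L < φ → k * A ≤ L) : φ * A ≤ L ^ 2 := by
  by_contra! hlt
  have hsqrt : L < √(φ * A) := Real.lt_sqrt_of_sq_lt hlt
  have hsqrt0 : 0 < √(φ * A) := hL.trans_lt hsqrt
  have hk := h (φ / √(φ * A)) (div_pos hφ hsqrt0) (by rwa [div_mul_eq_mul_div,
    div_lt_iff₀ hsqrt0, mul_lt_mul_iff_right₀ hφ])
  rw [div_mul_eq_mul_div, Real.div_sqrt] at hk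
  exact hk.not_gt hsqrt

lemma mul_cot_mul_norm_sub_sq_add_le_sq_eVariationOn (hJ : ∀ z, ⟪z, J z⟫ = 0) {z : ℝ → E}
    {t : ℝ → ℝ} {a b φ : ℝ} {K₁ K₂ : ℝ≥0} (hab : a ≤ b) (hφ₀ : 0 < φ) (hφ : φ < π)
    (hz : LipschitzOnWith K₁ z (Icc a b)) (ht : LipschitzOnWith K₂ t (Icc a b))
    (hderiv : ∀ᵐ s, s ∈ Ioo a b → ∃ z', HasDerivAt z z' s ∧
      HasDerivAt t (2 * ⟪z', J (z s)⟫) s) :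
    φ * (cot φ * ‖z b - z a‖ ^ 2 + (t b - t a - 2 * ⟪z b, J (z a)⟫)) ≤
      (eVariationOn z (Icc a b)).toReal ^ 2 := by
  have ha : a ∈ Icc a b := left_mem_Icc.2 hab
  have hbv := hz.locallyBoundedVariationOn
  set ℓ : ℝ → ℝ := variationOnFromTo z (Icc a b) a with hℓ
  have hℓb : ℓ b = (eVariationOn z (Icc a b)).toReal := by
    rw [hℓ, variationOnFromTo.eq_of_le _ _ hab, inter_self]
  have hℓ_lip : LipschitzOnWith K₁ ℓ (Icc a b) := lipschitzOnWith_variationOnFromTo hz ha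
  rw [← hℓb]
  -- `k * ℓ b < φ` keeps the calibration angle away from the pole of `cot` at `0`; the optimal
  -- `k = φ / ℓ b` is only reached in the limit.
  refine mul_le_sq_of_forall_mul_le (by rw [hℓb]; exact ENNReal.toReal_nonneg) hφ₀
    fun k hk hkφ ↦ ?_
  refine calibration_le (z := fun s ↦ z s - z a)
    (t := fun s ↦ t s - t a - 2 * ⟪z s, J (z a)⟫) hJ hab hk hφ hkφ
    (hz.sub (LipschitzWith.const (z a)).lipschitzOnWith) ?_ hℓ_lip
    (variationOnFromTo.monotoneOn hbv ha) (sub_self _) (by simp [hJ])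
    (variationOnFromTo.self _ _ _) ?_
  · have hinner := (innerSL ℝ (J (z a))).lipschitz.comp_lipschitzOnWith hz
    rw [← uIcc_of_le hab] at hinner ht
    simp only [real_inner_comm (J (z a))]
    have ht_sub := ht.sub (LipschitzWith.const (t a)).lipschitzOnWith
    exact ht_sub.absolutelyContinuousOnInterval.fun_sub
      (hinner.absolutelyContinuousOnInterval.const_mul 2)
  · have hℓ_diff := (uIcc_of_le hab ▸ hℓ_lip).absolutelyContinuousOnInterval.ae_differentiableAt
    filter_upwards [hderiv, hℓ_diff] with s hs hsℓ hsab
    obtain ⟨z', hz', ht'⟩ := hs hsab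
    have hℓ' := (hsℓ (by rw [uIcc_of_le hab]; exact Ioo_subset_Icc_self hsab)).hasDerivAt
    refine ⟨z', _, hz'.sub_const _, ?_, hℓ', norm_deriv_le_deriv_variationOnFromTo hbv ha
      (Icc_mem_nhds hsab.1 hsab.2) hz' hℓ'⟩
    have hinner' := (hz'.inner ℝ (hasDerivAt_const s (J (z a)))).const_mul 2
    refine ((ht'.sub_const (t a)).sub hinner').congr_deriv ?_
    rw [map_sub, inner_sub_right, inner_zero_right, zero_add]
    ring

lemma mul_cot_mul_norm_sub_sq_add_abs_le_sq_eVariationOn (hJ : ∀ z, ⟪z, J z⟫ = 0) {z : ℝ → E}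
    {t : ℝ → ℝ} {a b φ : ℝ} {K₁ K₂ : ℝ≥0} (hab : a ≤ b) (hφ₀ : 0 < φ) (hφ : φ < π)
    (hz : LipschitzOnWith K₁ z (Icc a b)) (ht : LipschitzOnWith K₂ t (Icc a b))
    (hderiv : ∀ᵐ s, s ∈ Ioo a b → ∃ z', HasDerivAt z z' s ∧
      HasDerivAt t (2 * ⟪z', J (z s)⟫) s) :
    φ * (cot φ * ‖z b - z a‖ ^ 2 + |t b - t a - 2 * ⟪z b, J (z a)⟫|) ≤
      (eVariationOn z (Icc a b)).toReal ^ 2 := by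
  rcases abs_choice (t b - t a - 2 * ⟪z b, J (z a)⟫) with h | h <;> rw [h]
  · exact mul_cot_mul_norm_sub_sq_add_le_sq_eVariationOn hJ hab hφ₀ hφ hz ht hderiv
  · let J' : E →ₗᵢ[ℝ] E := (LinearIsometryEquiv.neg ℝ).toLinearIsometry.comp J
    have hJ' (w : E) : J' w = -J w := rfl
    have hderiv' : ∀ᵐ s, s ∈ Ioo a b → ∃ z', HasDerivAt z z' s ∧
        HasDerivAt (-t) (2 * ⟪z', J' (z s)⟫) s := by
      filter_upwards [hderiv] with s hs hsab
      obtain ⟨z', hz', ht'⟩ := hs hsab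
      exact ⟨z', hz', by simpa only [hJ', inner_neg_right, mul_neg] using ht'.neg⟩
    have key := mul_cot_mul_norm_sub_sq_add_le_sq_eVariationOn (J := J')
      (fun w ↦ by rw [hJ', inner_neg_right, hJ, neg_zero]) hab hφ₀ hφ hz ht.neg hderiv'
    rw [hJ', inner_neg_right] at key
    convert key using 3
    simp only [Pi.neg_apply]
    ring

lemma inner_map_eq_neg_of_skew (hJ : ∀ z, ⟪z, J z⟫ = 0) (x y : E) : ⟪x, J y⟫ = -⟪y, J x⟫ := by
  have h := hJ (x + y)
  rw [map_add, inner_add_left, inner_add_right, inner_add_right, hJ, hJ] at h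
  linarith

lemma map_map_eq_neg_of_skew (hJ : ∀ z, ⟪z, J z⟫ = 0) (z : E) : J (J z) = -z := by
  refine ext_inner_left ℝ fun v ↦ ?_
  rw [inner_map_eq_neg_of_skew hJ, J.inner_map_map, inner_neg_right, real_inner_comm]

end Calibration

section Heisenberg

variable {n : ℕ}

/-- The horizontal plane `ℝ²ⁿ` of `ℍⁿ` with its Euclidean norm; `hproj` takes values in it. -/
abbrev HPlane (n : ℕ) : Type := EuclideanSpace ℝ (Fin n ⊕ Fin n)

/-- The rotation `J (x, y) = (y, -x)` of the horizontal plane. The form `⟪z', J z⟫` is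
`∑ⱼ (x'ⱼ yⱼ - y'ⱼ xⱼ)`, so that the group law and the horizontality condition can be written
without coordinates. -/
def rotJ (n : ℕ) : HPlane n →ₗᵢ[ℝ] HPlane n where
  toFun z := WithLp.toLp 2 (Sum.elim (fun j ↦ z (.inr j)) fun j ↦ -z (.inl j))
  map_add' z w := by ext (j | j) <;> simp [add_comm]
  map_smul' c z := by ext (j | j) <;> simp
  norm_map' z := by simp [EuclideanSpace.norm_eq, add_comm]

lemma inner_rotJ_eq_sum (z w : HPlane n) :
    ⟪z, rotJ n w⟫ = ∑ j, (z (.inl j) * w (.inr j) - z (.inr j) * w (.inl j)) := by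
  simp [rotJ, PiLp.inner_apply, mul_comm, sub_eq_add_neg, Finset.sum_add_distrib]

lemma inner_self_rotJ (z : HPlane n) : ⟪z, rotJ n z⟫ = 0 := by
  simp [inner_rotJ_eq_sum, mul_comm]

lemma inner_rotJ_comm (z w : HPlane n) : ⟪z, rotJ n w⟫ = -⟪w, rotJ n z⟫ :=
  inner_map_eq_neg_of_skew inner_self_rotJ z w

lemma rotJ_rotJ (z : HPlane n) : rotJ n (rotJ n z) = -z :=
  map_map_eq_neg_of_skew inner_self_rotJ z

/-- The projection `hproj` as a continuous linear map. -/
def hprojL (n : ℕ) : Hpt n →L[ℝ] HPlane n :=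
  LinearMap.toContinuousLinearMap
    { toFun := hproj
      map_add' := fun p q ↦ by ext (j | j) <;> simp [hproj]
      map_smul' := fun c p ↦ by ext (j | j) <;> simp [hproj] }

/-- The `t`-coordinate of `p⁻¹ * q`, a left-invariant height of `q` above `p`. -/
def vertDisp (p q : Hpt n) : ℝ := q.2.2 - p.2.2 - 2 * ⟪hproj q, rotJ n (hproj p)⟫

/-- The product `p * (ζ, τ)` in `ℍⁿ`. -/
def leftMul (p : Hpt n) (ζ : HPlane n) (τ : ℝ) : Hpt n :=
  (fun j ↦ p.1 j + ζ (.inl j), fun j ↦ p.2.1 j + ζ (.inr j),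
    p.2.2 + τ + 2 * ⟪ζ, rotJ n (hproj p)⟫)

lemma hproj_leftMul (p : Hpt n) (ζ : HPlane n) (τ : ℝ) :
    hproj (leftMul p ζ τ) = hproj p + ζ := by
  ext (j | j) <;> simp [hproj, leftMul]

lemma leftMul_snd_snd (p : Hpt n) (ζ : HPlane n) (τ : ℝ) :
    (leftMul p ζ τ).2.2 = p.2.2 + τ + 2 * ⟪ζ, rotJ n (hproj p)⟫ := rfl

lemma leftMul_zero_zero (p : Hpt n) : leftMul p 0 0 = p := by
  simp [leftMul]

lemma vertDisp_leftMul_leftMul (p : Hpt n) (ζ₁ ζ₂ : HPlane n) (τ₁ τ₂ : ℝ) :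
    vertDisp (leftMul p ζ₁ τ₁) (leftMul p ζ₂ τ₂) = τ₂ - τ₁ - 2 * ⟪ζ₂, rotJ n ζ₁⟫ := by
  have hswap := inner_rotJ_comm (hproj p) ζ₁
  simp only [vertDisp, leftMul_snd_snd, hproj_leftMul, map_add, inner_add_left, inner_add_right,
    inner_self_rotJ]
  linarith

lemma leftMul_leftMul (p : Hpt n) (ζ₁ ζ₂ : HPlane n) (τ₁ τ₂ : ℝ) :
    leftMul (leftMul p ζ₁ τ₁) ζ₂ τ₂ =
      leftMul p (ζ₁ + ζ₂) (τ₁ + τ₂ + 2 * ⟪ζ₂, rotJ n ζ₁⟫) := by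
  ext
  · simp [leftMul, add_assoc]
  · simp [leftMul, add_assoc]
  · simp only [leftMul_snd_snd, hproj_leftMul, map_add, inner_add_left, inner_add_right]
    ring

lemma hasDerivAt_leftMul (p : Hpt n) {ζ : ℝ → HPlane n} {τ : ℝ → ℝ} {ζ' : HPlane n} {τ' s : ℝ}
    (hζ : HasDerivAt ζ ζ' s) (hτ : HasDerivAt τ τ' s) :
    HasDerivAt (fun s ↦ leftMul p (ζ s) (τ s))
      (fun j ↦ ζ' (.inl j), fun j ↦ ζ' (.inr j), τ' + 2 * ⟪ζ', rotJ n (hproj p)⟫) s := by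
  have hcoord (i : Fin n ⊕ Fin n) : HasDerivAt (fun s ↦ ζ s i) (ζ' i) s :=
    (EuclideanSpace.proj (𝕜 := ℝ) i).hasFDerivAt.comp_hasDerivAt s hζ
  have hinner : HasDerivAt (fun s ↦ ⟪ζ s, rotJ n (hproj p)⟫) ⟪ζ', rotJ n (hproj p)⟫ s := by
    simpa using hζ.inner ℝ (hasDerivAt_const s (rotJ n (hproj p)))
  exact (hasDerivAt_pi.2 fun j ↦ (hcoord (.inl j)).const_add _).prodMk
    ((hasDerivAt_pi.2 fun j ↦ (hcoord (.inr j)).const_add _).prodMk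
      ((hτ.const_add _).add (hinner.const_mul 2)))

lemma contDiff_leftMul (p : Hpt n) {E : Type*} [NormedAddCommGroup E] [NormedSpace ℝ E]
    {ζ : E → HPlane n} {τ : E → ℝ} {m : WithTop ℕ∞} (hζ : ContDiff ℝ m ζ)
    (hτ : ContDiff ℝ m τ) : ContDiff ℝ m fun s ↦ leftMul p (ζ s) (τ s) := by
  have hinner : ContDiff ℝ m fun s ↦ ⟪ζ s, rotJ n (hproj p)⟫ := hζ.inner ℝ contDiff_const
  unfold leftMul
  fun_prop

lemma continuous_leftMul (p : Hpt n) :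
    Continuous fun q : HPlane n × ℝ ↦ leftMul p q.1 q.2 :=
  (contDiff_leftMul p contDiff_fst contDiff_snd (m := 0)).continuous

lemma sum_eq_inner_hproj_rotJ (p q : Hpt n) :
    ∑ j, (p.1 j * q.2.1 j - p.2.1 j * q.1 j) = ⟪hproj p, rotJ n (hproj q)⟫ :=
  (inner_rotJ_eq_sum (hproj p) (hproj q)).symm

lemma IsHorizontal.ae_hasDerivAt {γ : ℝ → Hpt n} {a b : ℝ} (hγ : IsHorizontal γ a b) :
    ∀ᵐ s, s ∈ Ioo a b → ∃ z', HasDerivAt (fun s ↦ hproj (γ s)) z' s ∧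
      HasDerivAt (fun s ↦ (γ s).2.2) (2 * ⟪z', rotJ n (hproj (γ s))⟫) s := by
  obtain ⟨-, -, γ', hγ', hhor⟩ := hγ
  rw [ae_restrict_iff' measurableSet_Icc] at hγ' hhor
  filter_upwards [hγ', hhor] with s hs hs' hsab
  have hderiv := hs (Ioo_subset_Icc_self hsab)
  refine ⟨hproj (γ' s), (hprojL n).hasFDerivAt.comp_hasDerivAt s hderiv, ?_⟩
  rw [← sum_eq_inner_hproj_rotJ, ← hs' (Ioo_subset_Icc_self hsab)]
  exact hderiv.snd.snd

/-- Isoperimetric inequality; equality holds on circular arcs of opening angle `2φ`. -/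
lemma IsHorizontal.mul_cot_mul_norm_sub_sq_add_abs_le_sq_hLength {γ : ℝ → Hpt n} {a b φ : ℝ}
    (hγ : IsHorizontal γ a b) (hφ₀ : 0 < φ) (hφ : φ < π) :
    φ * (cot φ * ‖hproj (γ b) - hproj (γ a)‖ ^ 2 + |vertDisp (γ a) (γ b)|) ≤
      (hLength γ a b).toReal ^ 2 := by
  obtain ⟨K, hK⟩ := hγ.2.1
  have hz := (hprojL n).lipschitz.comp_lipschitzOnWith hK
  have ht := LipschitzWith.prod_snd.comp_lipschitzOnWith
    (LipschitzWith.prod_snd.comp_lipschitzOnWith hK)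
  exact mul_cot_mul_norm_sub_sq_add_abs_le_sq_eVariationOn (z := fun s ↦ hproj (γ s))
    (t := fun s ↦ (γ s).2.2) inner_self_rotJ hγ.1 hφ₀ hφ hz ht hγ.ae_hasDerivAt

lemma ofReal_norm_hproj_sub_le_hLength {γ : ℝ → Hpt n} {a b : ℝ} (hab : a ≤ b) :
    ENNReal.ofReal ‖hproj (γ b) - hproj (γ a)‖ ≤ hLength γ a b := by
  rw [← dist_eq_norm, ← edist_dist]
  exact eVariationOn.edist_le _ (right_mem_Icc.2 hab) (left_mem_Icc.2 hab)

lemma isGeodesicOn_of_hLength_le {γ : ℝ → Hpt n} {a b : ℝ} {L : ℝ≥0∞} (hγ : IsHorizontal γ a b)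
    (hle : hLength γ a b ≤ L)
    (hmin : ∀ δ c d, IsHorizontal δ c d → δ c = γ a → δ d = γ b → L ≤ hLength δ c d) :
    IsGeodesicOn γ a b :=
  ⟨hγ, le_antisymm
    (le_iInf fun δ ↦ le_iInf fun c ↦ le_iInf fun d ↦ le_iInf fun hδ ↦ le_iInf fun hc ↦
      le_iInf fun hd ↦ hle.trans (hmin δ c d hδ hc hd))
    (iInf_le_of_le γ <| iInf_le_of_le a <| iInf_le_of_le b <| iInf_le_of_le hγ <|
      iInf_le_of_le rfl <| iInf_le _ rfl)⟩

lemma isHorizontal_leftMul (p : Hpt n) {ζ : ℝ → HPlane n} {τ : ℝ → ℝ} {a b : ℝ} (hab : a ≤ b)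
    (hζ : ContDiff ℝ 1 ζ) (hτ : ContDiff ℝ 1 τ)
    (hhor : ∀ s, deriv τ s = 2 * ⟪deriv ζ s, rotJ n (ζ s)⟫) :
    IsHorizontal (fun s ↦ leftMul p (ζ s) (τ s)) a b := by
  refine ⟨hab, (contDiff_leftMul p hζ hτ).contDiffOn.exists_lipschitzOnWith one_ne_zero
    (convex_Icc a b) isCompact_Icc, _, .of_forall fun s ↦ hasDerivAt_leftMul p
    (hζ.differentiable one_ne_zero s).hasDerivAt (hτ.differentiable one_ne_zero s).hasDerivAt,
    .of_forall fun s ↦ ?_⟩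
  have hproj_deriv (w : HPlane n) (c : ℝ) :
      hproj (fun j ↦ w (.inl j), fun j ↦ w (.inr j), c) = w := by
    ext (j | j) <;> rfl
  rw [sum_eq_inner_hproj_rotJ, hproj_deriv, hproj_leftMul, map_add, inner_add_right, hhor]
  ring

lemma hLength_leftMul_le (p : Hpt n) {ζ : ℝ → HPlane n} (τ : ℝ → ℝ) (a b : ℝ) {r : ℝ≥0}
    (hζ : LipschitzWith r ζ) :
    hLength (fun s ↦ leftMul p (ζ s) (τ s)) a b ≤ ENNReal.ofReal (r * (b - a)) := by
  rw [ENNReal.ofReal_mul r.coe_nonneg, ENNReal.ofReal_coe_nnreal]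
  simp only [hLength, hproj_leftMul]
  have hlip : LipschitzWith r fun s ↦ hproj p + ζ s := by
    simpa only [zero_add] using! (LipschitzWith.const (hproj p)).add hζ
  exact eVariationOn_le_of_lipschitzOnWith hlip.lipschitzOnWith Subset.rfl

lemma isGeodesicOn_segment (p : Hpt n) {e : HPlane n} (he : ‖e‖ = 1) (τ : ℝ) {a b : ℝ}
    (hab : a ≤ b) : IsGeodesicOn (fun s ↦ leftMul p (s • e) τ) a b := by
  have hζ (s : ℝ) : HasDerivAt (fun s : ℝ ↦ s • e) e s := by
    simpa using (hasDerivAt_id s).smul_const e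
  have hlip : LipschitzWith 1 fun s : ℝ ↦ s • e := by
    refine .of_dist_le_mul fun s t ↦ ?_
    simp [dist_eq_norm, ← sub_smul, norm_smul, he]
  refine isGeodesicOn_of_hLength_le
    (isHorizontal_leftMul p hab (contDiff_id.smul contDiff_const) contDiff_const fun s ↦ ?_)
    (hLength_leftMul_le p (fun _ ↦ τ) a b hlip) fun δ c d hδ hc hd ↦ ?_
  · rw [deriv_const, (hζ s).deriv, map_smul, real_inner_smul_right, inner_self_rotJ, mul_zero,
      mul_zero]
  · refine le_trans (le_of_eq ?_) (ofReal_norm_hproj_sub_le_hLength hδ.1)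
    rw [hc, hd, hproj_leftMul, hproj_leftMul, add_sub_add_left_eq_sub, ← sub_smul, norm_smul, he,
      mul_one, norm_of_nonneg (sub_nonneg.2 hab), NNReal.coe_one, one_mul]

/-- The point at angle `s` of the circle about the origin of the plane starting at `ρ`, traversed
with orientation `σ = ±1`. -/
def circlePoint (ρ : HPlane n) (σ s : ℝ) : HPlane n := cos s • ρ - (σ * sin s) • rotJ n ρ

lemma hasDerivAt_circlePoint (ρ : HPlane n) (σ s : ℝ) :
    HasDerivAt (circlePoint ρ σ) (-sin s • ρ - (σ * cos s) • rotJ n ρ) s :=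
  ((hasDerivAt_cos s).smul_const ρ).sub (((hasDerivAt_sin s).const_mul σ).smul_const _)

lemma inner_smul_sub_smul_rotJ (ρ : HPlane n) (c₁ s₁ c₂ s₂ : ℝ) :
    ⟪c₁ • ρ - s₁ • rotJ n ρ, rotJ n (c₂ • ρ - s₂ • rotJ n ρ)⟫ =
      (c₁ * s₂ - s₁ * c₂) * ‖ρ‖ ^ 2 := by
  simp only [map_sub, map_smul, rotJ_rotJ, inner_sub_left, inner_sub_right, real_inner_smul_left,
    real_inner_smul_right, inner_neg_right, inner_self_rotJ, real_inner_self_eq_norm_sq,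
    real_inner_comm ρ (rotJ n ρ), LinearIsometry.norm_map]
  ring

lemma norm_sq_smul_sub_smul_rotJ (ρ : HPlane n) (c s : ℝ) :
    ‖c • ρ - s • rotJ n ρ‖ ^ 2 = (c ^ 2 + s ^ 2) * ‖ρ‖ ^ 2 := by
  rw [sub_eq_add_neg, ← neg_smul, norm_sq_smul_add_smul_of_skew inner_self_rotJ, neg_sq]

/-- The horizontal lift of `circlePoint ρ σ`, translated by `p`. -/
def circleLift (p : Hpt n) (ρ : HPlane n) (σ s : ℝ) : Hpt n :=
  leftMul p (circlePoint ρ σ s) (-(2 * σ * ‖ρ‖ ^ 2 * s))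

lemma contDiff_circlePoint (ρ : HPlane n) (σ : ℝ) {m : WithTop ℕ∞} :
    ContDiff ℝ m (circlePoint ρ σ) :=
  (contDiff_cos.smul contDiff_const).sub ((contDiff_const.mul contDiff_sin).smul contDiff_const)

lemma lipschitzWith_circlePoint (ρ : HPlane n) {σ : ℝ} (hσ : σ ^ 2 = 1) :
    LipschitzWith ‖ρ‖₊ (circlePoint ρ σ) := by
  refine lipschitzWith_of_nnnorm_deriv_le
    (fun s ↦ (hasDerivAt_circlePoint ρ σ s).differentiableAt) fun s ↦ ?_
  rw [(hasDerivAt_circlePoint ρ σ s).deriv, ← NNReal.coe_le_coe, coe_nnnorm, coe_nnnorm,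
    ← sq_le_sq₀ (norm_nonneg _) (norm_nonneg _), norm_sq_smul_sub_smul_rotJ, neg_sq, mul_pow, hσ,
    one_mul, sin_sq_add_cos_sq, one_mul]

lemma isHorizontal_circleLift (p : Hpt n) (ρ : HPlane n) (σ : ℝ) {a b : ℝ} (hab : a ≤ b) :
    IsHorizontal (circleLift p ρ σ) a b := by
  refine isHorizontal_leftMul p hab (contDiff_circlePoint ρ σ) (by fun_prop) fun s ↦ ?_
  have hτ : deriv (fun s ↦ -(2 * σ * ‖ρ‖ ^ 2 * s)) s = -(2 * σ * ‖ρ‖ ^ 2) := by simp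
  rw [hτ, (hasDerivAt_circlePoint ρ σ s).deriv, circlePoint, inner_smul_sub_smul_rotJ]
  linear_combination (2 * σ * ‖ρ‖ ^ 2) * sin_sq_add_cos_sq s

lemma norm_sq_circlePoint_two_mul_sub (ρ : HPlane n) {σ : ℝ} (hσ : σ ^ 2 = 1) (φ : ℝ) :
    ‖circlePoint ρ σ (2 * φ) - circlePoint ρ σ 0‖ ^ 2 = 4 * sin φ ^ 2 * ‖ρ‖ ^ 2 := by
  have hchord : circlePoint ρ σ (2 * φ) - circlePoint ρ σ 0 =
      (cos (2 * φ) - 1) • ρ - (σ * sin (2 * φ)) • rotJ n ρ := by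
    simp only [circlePoint, cos_zero, sin_zero]
    module
  rw [hchord, norm_sq_smul_sub_smul_rotJ, mul_pow, hσ, sin_sq (2 * φ), cos_two_mul, sin_sq]
  ring

lemma vertDisp_circleLift (p : Hpt n) (ρ : HPlane n) (σ φ : ℝ) :
    vertDisp (circleLift p ρ σ 0) (circleLift p ρ σ φ) = -(2 * σ * ‖ρ‖ ^ 2 * (φ - sin φ)) := by
  rw [circleLift, circleLift, vertDisp_leftMul_leftMul, circlePoint, circlePoint,
    inner_smul_sub_smul_rotJ, cos_zero, sin_zero]
  ring

lemma isGeodesicOn_circleLift (p : Hpt n) (ρ : HPlane n) {σ φ : ℝ} (hσ : σ ^ 2 = 1) (hφ₀ : 0 < φ)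
    (hφ : φ < π) : IsGeodesicOn (circleLift p ρ σ) 0 (2 * φ) := by
  refine isGeodesicOn_of_hLength_le (isHorizontal_circleLift p ρ σ (by positivity))
    (hLength_leftMul_le p _ _ _ (lipschitzWith_circlePoint ρ hσ)) fun δ c d hδ hc hd ↦ ?_
  have hchord : ‖hproj (δ d) - hproj (δ c)‖ ^ 2 = 4 * sin φ ^ 2 * ‖ρ‖ ^ 2 := by
    rw [hc, hd, circleLift, circleLift, hproj_leftMul, hproj_leftMul, add_sub_add_left_eq_sub,
      norm_sq_circlePoint_two_mul_sub ρ hσ]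
  have hheight : |vertDisp (δ c) (δ d)| = 2 * ‖ρ‖ ^ 2 * (2 * φ - sin (2 * φ)) := by
    have hσ_abs : |σ| = 1 := abs_eq_one_of_sq_eq_one hσ
    have hsin : sin (2 * φ) ≤ 2 * φ := sin_le (by positivity)
    rw [hc, hd, vertDisp_circleLift, abs_neg, abs_mul, abs_mul, abs_mul, hσ_abs,
      abs_of_nonneg (sub_nonneg.2 hsin), abs_of_nonneg (sq_nonneg ‖ρ‖), abs_two, mul_one]
  have hcot : cot φ * (4 * sin φ ^ 2 * ‖ρ‖ ^ 2) = 2 * ‖ρ‖ ^ 2 * sin (2 * φ) := by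
    have hsin : sin φ ≠ 0 := (sin_pos_of_pos_of_lt_pi hφ₀ hφ).ne'
    rw [cot_eq_cos_div_sin, sin_two_mul]
    field_simp
    ring
  have hsq : (‖ρ‖ * (2 * φ)) ^ 2 ≤ (hLength δ c d).toReal ^ 2 :=
    calc (‖ρ‖ * (2 * φ)) ^ 2 =
          φ * (2 * ‖ρ‖ ^ 2 * sin (2 * φ) + 2 * ‖ρ‖ ^ 2 * (2 * φ - sin (2 * φ))) := by ring
      _ ≤ _ := by
        simpa only [hchord, hheight, hcot] using
          hδ.mul_cot_mul_norm_sub_sq_add_abs_le_sq_hLength hφ₀ hφ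
  rw [sub_zero, coe_nnnorm]
  exact ENNReal.ofReal_le_of_le_toReal (le_of_sq_le_sq hsq ENNReal.toReal_nonneg)

end Heisenberg

section Recrossing

variable {n : ℕ} {p : Hpt n} {e : HPlane n} {σ a b : ℝ}

lemma circleLift_leftMul (p : Hpt n) (c ρ : HPlane n) (σ s : ℝ) :
    circleLift (leftMul p c (-(2 * ⟪ρ, rotJ n c⟫))) ρ σ s = leftMul p (c + circlePoint ρ σ s)
      (2 * ⟪circlePoint ρ σ s - ρ, rotJ n c⟫ - 2 * σ * ‖ρ‖ ^ 2 * s) := by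
  rw [circleLift, leftMul_leftMul, inner_sub_left]
  congr 1
  ring

/-- The lift of the circle about `-(a + b) / 2 • (e + σ J e)` that leaves `-a e` at height `0`
relative to `p`. It meets the line `ℝ e` again at `-b e` before reaching `-σ b J e` after a quarter
turn. -/
def recrossingArc (p : Hpt n) (e : HPlane n) (σ a b : ℝ) : ℝ → Hpt n :=
  let c : HPlane n := -((a + b) / 2) • (e + σ • rotJ n e)
  let ρ : HPlane n := -((a - b) / 2) • e + (σ * ((a + b) / 2)) • rotJ n e
  circleLift (leftMul p c (-(2 * ⟪ρ, rotJ n c⟫))) ρ σ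

lemma isGeodesicOn_recrossingArc (hσ : σ ^ 2 = 1) :
    IsGeodesicOn (recrossingArc p e σ a b) 0 (π / 2) := by
  rw [show π / 2 = 2 * (π / 4) by ring]
  exact isGeodesicOn_circleLift _ _ hσ (by positivity) (by linarith [pi_pos])

lemma recrossingArc_eq_leftMul (he : ‖e‖ = 1) (hσ : σ ^ 2 = 1) {s α β : ℝ}
    (hα : α = (a + b) / 2 * (sin s - 1) - (a - b) / 2 * cos s)
    (hβ : β = (a + b) / 2 * (cos s - 1) + (a - b) / 2 * sin s) :
    recrossingArc p e σ a b s = leftMul p (α • e + (σ * β) • rotJ n e)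
      (-σ * ((a ^ 2 + b ^ 2) * s - (a + b) * (α + a - β))) := by
  set c : HPlane n := -((a + b) / 2) • (e + σ • rotJ n e) with hc
  set ρ : HPlane n := -((a - b) / 2) • e + (σ * ((a + b) / 2)) • rotJ n e with hρ
  have hplane : c + circlePoint ρ σ s = α • e + (σ * β) • rotJ n e := by
    simp only [circlePoint, hc, hρ, map_add, map_smul, rotJ_rotJ, hα, hβ]
    linear_combination (norm := module) ((a + b) / 2 * sin s) • hσ • e
  have hradius : ‖ρ‖ ^ 2 = (a ^ 2 + b ^ 2) / 2 := by
    rw [hρ, norm_sq_smul_add_smul_of_skew inner_self_rotJ, mul_pow, hσ, he]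
    ring
  have hinner : ⟪circlePoint ρ σ s - ρ, rotJ n c⟫ = σ * ((a + b) / 2 * (α + a - β)) := by
    have hdisp : circlePoint ρ σ s - ρ = (α + a) • e - (-(σ * β)) • rotJ n e := by
      linear_combination (norm := module) hplane
    have hcenter : c = -((a + b) / 2) • e - ((a + b) / 2 * σ) • rotJ n e := by
      rw [hc]
      module
    rw [hdisp, hcenter, inner_smul_sub_smul_rotJ, he]
    ring
  change circleLift (leftMul p c (-(2 * ⟪ρ, rotJ n c⟫))) ρ σ s = _
  rw [circleLift_leftMul, hplane, hradius, hinner]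
  congr 1
  ring

lemma recrossingArc_zero (he : ‖e‖ = 1) (hσ : σ ^ 2 = 1) :
    recrossingArc p e σ a b 0 = leftMul p (-a • e) 0 := by
  rw [recrossingArc_eq_leftMul (α := -a) (β := 0) he hσ (by simp; ring) (by simp)]
  simp

lemma recrossingArc_pi_div_two (he : ‖e‖ = 1) (hσ : σ ^ 2 = 1) :
    recrossingArc p e σ a b (π / 2) = leftMul p (-(σ * b) • rotJ n e)
      (-σ * ((π / 2 - 1) * (a ^ 2 + b ^ 2) - 2 * a * b)) := by
  rw [recrossingArc_eq_leftMul (α := 0) (β := -b) he hσ (by simp) (by simp; ring)]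
  congr 1
  · simp
  · ring

lemma exists_recrossingArc_eq (he : ‖e‖ = 1) (hσ : σ ^ 2 = 1) (hb : 0 < b) (hab : b < a) :
    ∃ s ∈ Icc 0 (π / 2), ∃ τ, τ ≠ 0 ∧ |τ| ≤ 4 * a ^ 2 ∧
      recrossingArc p e σ a b s = leftMul p (-b • e) τ := by
  have hD : 0 < a ^ 2 + b ^ 2 := by positivity
  -- The angle at which `recrossingArc_eq_leftMul` has `α = -b` and `β = 0`.
  set s := arcsin ((a ^ 2 - b ^ 2) / (a ^ 2 + b ^ 2)) with hs
  have hs₀ : 0 < s := arcsin_pos.2 (div_pos (by nlinarith) hD)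
  have hs₁ : s ≤ π / 2 := arcsin_le_pi_div_two _
  have hsin : sin s = (a ^ 2 - b ^ 2) / (a ^ 2 + b ^ 2) :=
    sin_arcsin (by rw [le_div_iff₀ hD]; nlinarith) (by rw [div_le_one hD]; nlinarith)
  have hcos : cos s = 2 * a * b / (a ^ 2 + b ^ 2) := by
    have hsq : 1 - ((a ^ 2 - b ^ 2) / (a ^ 2 + b ^ 2)) ^ 2 =
        (2 * a * b / (a ^ 2 + b ^ 2)) ^ 2 := by
      field_simp
      ring
    rw [hs, cos_arcsin, hsq, sqrt_sq (by have := hb.trans hab; positivity)]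
  have hgap : 0 < s - sin s := sub_pos.2 (sin_lt hs₀)
  refine ⟨s, ⟨hs₀.le, hs₁⟩, -σ * ((a ^ 2 + b ^ 2) * (s - sin s)), ?_, ?_, ?_⟩
  · exact mul_ne_zero (neg_ne_zero.2 (by rintro rfl; norm_num at hσ)) (by positivity)
  · have hσ_abs : |σ| = 1 := abs_eq_one_of_sq_eq_one hσ
    rw [abs_mul, abs_neg, hσ_abs, one_mul, abs_of_pos (by positivity)]
    calc (a ^ 2 + b ^ 2) * (s - sin s) ≤ (a ^ 2 + a ^ 2) * 2 := by
          gcongr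
          linarith [pi_le_four, sin_pos_of_pos_of_lt_pi hs₀ (by linarith [pi_pos])]
      _ = 4 * a ^ 2 := by ring
  · rw [recrossingArc_eq_leftMul (α := -b) (β := 0) he hσ]
    · congr 1
      · simp
      · rw [hsin]
        field_simp
        ring
    · rw [hsin, hcos]
      field_simp
      ring
    · rw [hsin, hcos]
      field_simp
      ring

end Recrossing

section GraphGerm

/-- `Ω` is, over the ball of radius `r` and up to height `h` around `p`, the graph of the continuous
function `F`, in the coordinates `(ζ, τ) ↦ p * (ζ, τ)`. -/
structure IsGraphNear {n : ℕ} (Ω : Set (Hpt n)) (p : Hpt n) (F : HPlane n → ℝ) (r h : ℝ) :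
    Prop where
  r_pos : 0 < r
  h_pos : 0 < h
  continuousOn : ContinuousOn F (Metric.ball 0 r)
  map_zero : F 0 = 0
  abs_lt {ζ : HPlane n} (hζ : ‖ζ‖ < r) : |F ζ| < h
  mem_iff {ζ : HPlane n} (hζ : ‖ζ‖ < r) {τ : ℝ} (hτ : |τ| < h) : leftMul p ζ τ ∈ Ω ↔ τ = F ζ

lemma exists_norm_eq_map_eq_map_neg {E : Type*} [NormedAddCommGroup E] [NormedSpace ℝ E]
    (hE : 1 < Module.rank ℝ E) {f : E → ℝ} {R : ℝ} (hR : 0 ≤ R)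
    (hf : ContinuousOn f (Metric.sphere 0 R)) : ∃ x, ‖x‖ = R ∧ f x = f (-x) := by
  have : Nontrivial E := rank_pos_iff_nontrivial.1 (zero_lt_one.trans hE)
  obtain ⟨x₀, hx₀⟩ := NormedSpace.sphere_nonempty (x := (0 : E)).2 hR
  wlog hle : f x₀ ≤ f (-x₀) generalizing x₀
  · exact this (-x₀) (by simpa using hx₀) (by simpa using (not_le.1 hle).le)
  have hneg : ContinuousOn (fun x ↦ f (-x)) (Metric.sphere 0 R) :=
    hf.comp continuous_neg.continuousOn fun x hx ↦ by simpa using hx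
  obtain ⟨x, hx, hfx⟩ := (isPreconnected_sphere hE 0 R).intermediate_value₂ hx₀
    (b := -x₀) (by simpa using hx₀) hf hneg hle (by simpa using hle)
  exact ⟨x, by simpa using hx, hfx⟩

lemma exists_height_pi_div_two_eq {δ b w : ℝ} (hb : 0 < b) (hbδ : b ≤ δ / 8) (hw₀ : 0 ≤ w)
    (hw : w ≤ δ ^ 2 / 4) :
    ∃ a, b < a ∧ a ≤ δ ∧ (π / 2 - 1) * (a ^ 2 + b ^ 2) - 2 * a * b = w := by
  have hcont : ContinuousOn (fun a ↦ (π / 2 - 1) * (a ^ 2 + b ^ 2) - 2 * a * b) (Icc b δ) := by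
    fun_prop
  have hleft : (π / 2 - 1) * (b ^ 2 + b ^ 2) - 2 * b * b < w := by
    nlinarith [pi_lt_four, sq_pos_of_pos hb]
  have hright : w ≤ (π / 2 - 1) * (δ ^ 2 + b ^ 2) - 2 * δ * b := by
    nlinarith [pi_gt_three, sq_nonneg δ, sq_nonneg b]
  obtain ⟨a, ⟨hba, haδ⟩, ha⟩ := intermediate_value_Ioc (by linarith) hcont ⟨hleft, hright⟩
  exact ⟨a, hba, haδ, ha⟩

variable {n : ℕ} {Ω : Set (Hpt n)} {p : Hpt n} {F : HPlane n → ℝ} {r h : ℝ}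

lemma GeodConvexSet.map_smul_eq_zero (hΩ : GeodConvexSet Ω) (hF : IsGraphNear Ω p F r h)
    {e : HPlane n} (he : ‖e‖ = 1) {R : ℝ} (hR : R < r) (heq : F (R • e) = F (-(R • e))) {s : ℝ}
    (hs : |s| ≤ R) : F (s • e) = 0 := by
  have hnorm {s : ℝ} (hs : |s| ≤ R) : ‖s • e‖ < r := by
    rw [norm_smul, he, mul_one]
    exact hs.trans_lt hR
  have hR₀ : 0 ≤ R := (abs_nonneg s).trans hs
  have hw : |F (R • e)| < h := hF.abs_lt (hnorm (abs_of_nonneg hR₀).le)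
  have hconst {s : ℝ} (hs : |s| ≤ R) : F (R • e) = F (s • e) := by
    refine (hF.mem_iff (hnorm hs) hw).1 ?_
    refine hΩ _ ?_ _ ?_ _ (-R) R (isGeodesicOn_segment p he (F (R • e)) (by linarith)) rfl rfl s
      (abs_le.1 hs)
    · exact (hF.mem_iff (hnorm (by rw [abs_neg, abs_of_nonneg hR₀])) hw).2 (by rw [heq, neg_smul])
    · exact (hF.mem_iff (hnorm (abs_of_nonneg hR₀).le) hw).2 rfl
  rw [← hconst hs, hconst (s := 0) (by simpa using hR₀), zero_smul, hF.map_zero]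

lemma not_geodConvexSet_of_recrossing (hF : IsGraphNear Ω p F r h) {e : HPlane n}
    (he : ‖e‖ = 1) {σ a b : ℝ} (hσ : σ ^ 2 = 1) (hb : 0 < b) (hab : b < a) (har : a < r)
    (hah : 4 * a ^ 2 < h) (hFa : F (-a • e) = 0) (hFb : F (-b • e) = 0)
    (hFσ : F (-(σ * b) • rotJ n e) = -σ * ((π / 2 - 1) * (a ^ 2 + b ^ 2) - 2 * a * b)) :
    ¬ GeodConvexSet Ω := by
  intro hΩ
  have hσ_abs : |σ| = 1 := abs_eq_one_of_sq_eq_one hσ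
  have hh : |(0 : ℝ)| < h := by simpa using hF.h_pos
  have ha_norm : ‖-a • e‖ < r := by
    rwa [norm_smul, he, mul_one, norm_neg, norm_of_nonneg (hb.trans hab).le]
  have hb_norm : ‖-b • e‖ < r := by
    rw [norm_smul, he, mul_one, norm_neg, norm_of_nonneg hb.le]
    exact hab.trans har
  have hσ_norm : ‖-(σ * b) • rotJ n e‖ < r := by
    rw [norm_smul, (rotJ n).norm_map, he, mul_one, norm_neg, norm_mul, norm_eq_abs, hσ_abs,
      one_mul, norm_of_nonneg hb.le]
    exact hab.trans har
  have hstart : leftMul p (-a • e) 0 ∈ Ω := (hF.mem_iff ha_norm hh).2 hFa.symm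
  have hend : leftMul p (-(σ * b) • rotJ n e) (F (-(σ * b) • rotJ n e)) ∈ Ω :=
    (hF.mem_iff hσ_norm (hF.abs_lt hσ_norm)).2 rfl
  obtain ⟨s, hs, τ, hτ₀, hτ, hτ_eq⟩ := exists_recrossingArc_eq (p := p) he hσ hb hab
  have hmem : leftMul p (-b • e) τ ∈ Ω := hτ_eq ▸ hΩ _ hstart _ hend _ 0 (π / 2)
    (isGeodesicOn_recrossingArc hσ) (recrossingArc_zero he hσ)
    (by rw [recrossingArc_pi_div_two he hσ, hFσ]) s hs
  exact hτ₀ (((hF.mem_iff hb_norm (hτ.trans_lt hah)).1 hmem).trans hFb)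

lemma GeodConvexSet.exists_norm_eq_one_forall_map_smul_eq_zero (hn : 1 ≤ n)
    (hΩ : GeodConvexSet Ω) (hF : IsGraphNear Ω p F r h) {R : ℝ} (hR₀ : 0 < R) (hR : R < r) :
    ∃ e : HPlane n, ‖e‖ = 1 ∧ ∀ s, |s| ≤ R → F (s • e) = 0 := by
  have hrank : 1 < Module.rank ℝ (HPlane n) := by
    rw [← Module.finrank_eq_rank, finrank_euclideanSpace, Fintype.card_sum, Fintype.card_fin]
    exact_mod_cast (by lia : 1 < n + n)
  obtain ⟨x, hx, heq⟩ := exists_norm_eq_map_eq_map_neg hrank hR₀.le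
    (hF.continuousOn.mono (Metric.sphere_subset_ball hR))
  have hRx : R • R⁻¹ • x = x := smul_inv_smul₀ hR₀.ne' x
  have he : ‖R⁻¹ • x‖ = 1 := by
    rw [norm_smul, norm_inv, norm_of_nonneg hR₀.le, hx, inv_mul_cancel₀ hR₀.ne']
  exact ⟨R⁻¹ • x, he, fun s hs ↦ hΩ.map_smul_eq_zero hF he hR (by rwa [hRx]) hs⟩

lemma IsGraphNear.exists_pos_abs_map_smul_le (hF : IsGraphNear Ω p F r h) (v : HPlane n)
    {ε η : ℝ} (hε : 0 < ε) (hη : 0 < η) : ∃ b, 0 < b ∧ b ≤ ε ∧ |F (b • v)| ≤ η := by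
  have hcont : ContinuousAt (fun b : ℝ ↦ |F (b • v)|) 0 := by
    refine ContinuousAt.abs (ContinuousAt.comp (g := F) ?_ (by fun_prop))
    rw [zero_smul]
    exact hF.continuousOn.continuousAt (Metric.ball_mem_nhds 0 hF.r_pos)
  have hsmall : ∀ᶠ b : ℝ in 𝓝[>] 0, |F (b • v)| < η :=
    hcont.continuousWithinAt.tendsto.eventually_lt_const (by simpa [hF.map_zero] using hη)
  obtain ⟨b, hFb, hb₀, hbε⟩ := (hsmall.and (Ioc_mem_nhdsGT hε)).exists
  exact ⟨b, hb₀, hbε, hFb.le⟩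

lemma not_geodConvexSet_of_isGraphNear (hn : 1 ≤ n) (hF : IsGraphNear Ω p F r h) :
    ¬ GeodConvexSet Ω := by
  intro hΩ
  obtain ⟨δ, hδ₀, hδ⟩ : ∃ δ > 0, δ < r ∧ 4 * δ ^ 2 < h := by
    have hsmall : ∀ᶠ δ in 𝓝[>] 0, 4 * δ ^ 2 < h :=
      (by fun_prop : Continuous fun δ : ℝ ↦ 4 * δ ^ 2).continuousWithinAt.eventually_lt_const
        (by simpa using hF.h_pos)
    obtain ⟨δ, hδh, hδ₀, hδr⟩ := (hsmall.and (Ioo_mem_nhdsGT hF.r_pos)).exists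
    exact ⟨δ, hδ₀, hδr, hδh⟩
  obtain ⟨e, he, hFe⟩ := hΩ.exists_norm_eq_one_forall_map_smul_eq_zero hn hF hδ₀ hδ.1
  obtain ⟨b, hb₀, hbδ, hFb⟩ := hF.exists_pos_abs_map_smul_le (-rotJ n e)
    (by positivity : 0 < δ / 8) (by positivity : 0 < δ ^ 2 / 4)
  obtain ⟨a, hba, haδ, hheight⟩ := exists_height_pi_div_two_eq hb₀ hbδ (abs_nonneg _) hFb
  obtain ⟨σ, hσ, hFσ⟩ : ∃ σ : ℝ, σ ^ 2 = 1 ∧ F (b • -rotJ n e) = -σ * |F (b • -rotJ n e)| := by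
    rcases abs_choice (F (b • -rotJ n e)) with habs | habs
    · exact ⟨-1, by norm_num, by rw [habs]; ring⟩
    · exact ⟨1, by norm_num, by rw [habs]; ring⟩
  have hσ_abs : |σ| = 1 := abs_eq_one_of_sq_eq_one hσ
  have hFline {c : ℝ} (hc₀ : 0 ≤ c) (hc : c ≤ δ) : F (-c • σ • e) = 0 := by
    rw [smul_smul]
    refine hFe _ ?_
    rwa [abs_mul, hσ_abs, abs_neg, mul_one, abs_of_nonneg hc₀]
  refine not_geodConvexSet_of_recrossing hF (e := σ • e) ?_ hσ hb₀ hba (haδ.trans_lt hδ.1) ?_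
    (hFline (hb₀.trans hba).le haδ) (hFline hb₀.le (hba.le.trans haδ)) ?_ hΩ
  · rw [norm_smul, norm_eq_abs, hσ_abs, he, mul_one]
  · have ha₀ : 0 ≤ a := (hb₀.trans hba).le
    exact (by gcongr : 4 * a ^ 2 ≤ 4 * δ ^ 2).trans_lt hδ.2
  · have hQ : -(σ * b) • rotJ n (σ • e) = b • -rotJ n e := by
      rw [map_smul]
      linear_combination (norm := module) (-b) • hσ • rotJ n e
    rw [hQ, hheight, ← hFσ]

lemma exists_pos_forall_leftMul_mem {W : Set (Hpt n)} (hW : IsOpen W) (hpW : p ∈ W) :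
    ∃ ε > 0, ∀ ζ τ, ‖ζ‖ < ε → |τ| < ε → leftMul p ζ τ ∈ W := by
  obtain ⟨ε, hε, hball⟩ := Metric.isOpen_iff.1 (hW.preimage (continuous_leftMul p)) (0, 0)
    (by rwa [mem_preimage, leftMul_zero_zero])
  exact ⟨ε, hε, fun ζ τ hζ hτ ↦ hball (a := (ζ, τ)) (by simp [Prod.dist_eq, hζ, hτ])⟩

lemma exists_isGraphNear {U : Set ((Fin n → ℝ) × (Fin n → ℝ))}
    {f : (Fin n → ℝ) × (Fin n → ℝ) → ℝ} {W : Set (Hpt n)} (hp : p ∈ Ω) (hU : IsOpen U)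
    (hf : ContinuousOn f U) (hW : IsOpen W) (hpW : p ∈ W)
    (hgraph : Ω ∩ W = {q : Hpt n | (q.1, q.2.1) ∈ U ∧ q.2.2 = f (q.1, q.2.1)}) :
    ∃ F r h, IsGraphNear Ω p F r h := by
  let base (ζ : HPlane n) : (Fin n → ℝ) × (Fin n → ℝ) :=
    ((leftMul p ζ 0).1, (leftMul p ζ 0).2.1)
  let F (ζ : HPlane n) : ℝ := f (base ζ) - p.2.2 - 2 * ⟪ζ, rotJ n (hproj p)⟫
  have hmem_iff {ζ : HPlane n} {τ : ℝ} (hζ : base ζ ∈ U) (hτ : leftMul p ζ τ ∈ W) :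
      leftMul p ζ τ ∈ Ω ↔ τ = F ζ :=
    calc leftMul p ζ τ ∈ Ω ↔ leftMul p ζ τ ∈ Ω ∩ W := (and_iff_left hτ).symm
      _ ↔ base ζ ∈ U ∧ p.2.2 + τ + 2 * ⟪ζ, rotJ n (hproj p)⟫ = f (base ζ) := by rw [hgraph]; rfl
      _ ↔ τ = F ζ := by rw [and_iff_right hζ]; constructor <;> intro h <;> linarith
  have hbase : Continuous base := by
    have hleft := (continuous_leftMul p).comp (Continuous.prodMk_left (0 : ℝ))
    exact hleft.fst.prodMk hleft.snd.fst
  have hF : ContinuousOn F (base ⁻¹' U) :=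
    ((hf.comp hbase.continuousOn (mapsTo_preimage base U)).sub continuousOn_const).sub
      (by fun_prop)
  have hbase₀ : base 0 ∈ U := by
    simpa only [base, leftMul_zero_zero] using (hgraph.subset ⟨hp, hpW⟩).1
  have hF₀ : F 0 = 0 := by
    refine ((hmem_iff hbase₀ ?_).1 ?_).symm <;> rwa [leftMul_zero_zero]
  have hU_nhds : base ⁻¹' U ∈ 𝓝 0 := (hU.preimage hbase).mem_nhds hbase₀
  obtain ⟨h, hh, hhW⟩ := exists_pos_forall_leftMul_mem hW hpW
  have hF_nhds : ∀ᶠ ζ in 𝓝 0, |F ζ| < h :=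
    (hF.continuousAt hU_nhds).abs.eventually_lt_const (by simpa only [hF₀, abs_zero])
  obtain ⟨r, hr, hball⟩ := Metric.mem_nhds_iff.1
    (Filter.inter_mem (Filter.inter_mem hU_nhds hF_nhds) (Metric.ball_mem_nhds 0 hh))
  have hnorm {ζ : HPlane n} (hζ : ‖ζ‖ < r) := hball (mem_ball_zero_iff.2 hζ)
  exact ⟨F, r, h, hr, hh, hF.mono fun ζ hζ ↦ (hball hζ).1.1, hF₀, fun hζ ↦ (hnorm hζ).1.2,
    fun hζ _ hτ ↦ hmem_iff (hnorm hζ).1.1 (hhW _ _ (mem_ball_zero_iff.1 (hnorm hζ).2) hτ)⟩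

end GraphGerm

/-- If a neighbourhood of some point of `Ω ⊆ ℍⁿ` in `Ω` is the graph of
a continuous function over the `z`-plane, then `Ω` is not geodetically convex. -/
theorem stmt_12 (n : ℕ) (hn : 1 ≤ n) (Ω : Set (Hpt n)) (ξ₀ : Hpt n) (hξ : ξ₀ ∈ Ω)
    (U : Set ((Fin n → ℝ) × (Fin n → ℝ))) (hU : IsOpen U)
    (f : (Fin n → ℝ) × (Fin n → ℝ) → ℝ) (hf : ContinuousOn f U)
    (W : Set (Hpt n)) (hW : IsOpen W) (hξW : ξ₀ ∈ W)
    (hgraph : Ω ∩ W = {p : Hpt n | (p.1, p.2.1) ∈ U ∧ p.2.2 = f (p.1, p.2.1)}) :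
    ¬ GeodConvexSet Ω := by
  obtain ⟨F, r, h, hF⟩ := exists_isGraphNear hξ hU hf hW hξW hgraph
  exact not_geodConvexSet_of_isGraphNear hn hF
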